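/- arXiv:2308.11953 — 3 statements merged into one kernel-verified Lean document; each statement's English description precedes it below -/
import Mathlib

section
/- Let E_c and E_s be real Hilbert spaces and let E = E_c × E_s carry the product inner product. Let S ≥ μ > 0, R ≥ 0, H ≥ 0, and integers N, T, K, M ≥ 1. Set γ = max(8S/μ − 1, K·M) and η_i = 2/(μ(γ + i)) for i ∈ ℕ. Let F : E → ℝ be S-smooth with gradient G, and let w* = (w_c*, w_s*) ∈ E satisfy G(w*) = 0. Let (Ω, P) be a probability space and, for i = 0, 1, …, TKM, let W_c^i : Ω → E_c and W_s^i : Ω → E_s be random vectors such that ‖W_c^i − w_c*‖² and ‖W_s^i − w_s*‖² are integrable and F∘(W_c^{TKM}, W_s^{TKM}) is integrable. Define Δ_s(i) = 𝔼‖W_s^i − w_s*‖² and Δ_c(i) = 𝔼‖W_c^i − w_c*‖², and assume that for all 0 ≤ i < TKM the recursions Δ_s(i+1) ≤ (1 − μη_i)Δ_s(i) + 2η_i²R²/N² and Δ_c(i+1) ≤ (1 − μη_i)Δ_c(i) + η_i²H hold. Then 𝔼[F(W_c^{TKM}, W_s^{TKM})] − F(w*) ≤ (S/2)(L_s + L_c),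 where L_s = (8R² + μ²N²(γ+1)Δ_s(0))/(μ²N²(γ + TKM)) and L_c = (4H + μ²(γ+1)Δ_c(0))/(μ²(γ + TKM)). -/
open MeasureTheory RealInnerProductSpace

/-!
At a stationary point `w*`, smoothness says that `F` exceeds `F w*` by at most
`S / 2 * ‖w - w*‖ ^ 2`, and in an `L²` product this squared distance is the sum of the client-side
and the server-side ones. Each of the two satisfies, with `x = γ + i`, a recursion
`D (i + 1) ≤ (1 - 2 / x) * D i + b / x ^ 2`. Choosing `v ≥ b` with `D 0 ≤ v / γ`, the bound
`D i ≤ v / (γ + i)` propagates, because `(x - 1) / x ^ 2 ≤ 1 / (x + 1)`.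
-/

section Recursion

variable {𝕜 : Type*} [Field 𝕜] [LinearOrder 𝕜] [IsStrictOrderedRing 𝕜]

lemma one_sub_two_div_mul_div_add_div_sq_le {v x : 𝕜} (hv : 0 ≤ v) (hx : 0 < x) :
    (1 - 2 / x) * (v / x) + v / x ^ 2 ≤ v / (x + 1) := by
  have gap : v / (x + 1) - ((1 - 2 / x) * (v / x) + v / x ^ 2) = v / (x ^ 2 * (x + 1)) := by
    field_simp
    ring
  have gap_nonneg : 0 ≤ v / (x ^ 2 * (x + 1)) := by positivity
  exact sub_nonneg.mp (gap ▸ gap_nonneg)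

lemma le_div_add_natCast_of_recursion {γ v : 𝕜} (hγ : 2 ≤ γ) (hv : 0 ≤ v) {D : ℕ → 𝕜}
    (hD : D 0 ≤ v / γ) {n : ℕ}
    (hrec : ∀ i < n, D (i + 1) ≤ (1 - 2 / (γ + i)) * D i + v / (γ + i) ^ 2) :
    D n ≤ v / (γ + n) := by
  induction n with
  | zero => simpa using hD
  | succ n ih =>
    have two_le : 2 ≤ γ + n := le_add_of_le_of_nonneg hγ n.cast_nonneg
    have pos : 0 < γ + n := two_pos.trans_le two_le
    have contraction_nonneg : 0 ≤ 1 - 2 / (γ + n) := sub_nonneg.mpr ((div_le_one pos).mpr two_le)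
    calc D (n + 1) ≤ (1 - 2 / (γ + n)) * D n + v / (γ + n) ^ 2 := hrec n n.lt_succ_self
      _ ≤ (1 - 2 / (γ + n)) * (v / (γ + n)) + v / (γ + n) ^ 2 := by
        gcongr
        exact ih fun i hi => hrec i (hi.trans n.lt_succ_self)
      _ ≤ v / (γ + n + 1) := one_sub_two_div_mul_div_add_div_sq_le hv pos
      _ = v / (γ + (n + 1 : ℕ)) := by rw [Nat.cast_succ, add_assoc]

lemma le_div_of_sgd_recursion {γ μ B : 𝕜} (hγ : 2 ≤ γ) (hμ : 0 < μ) (hB : 0 ≤ B)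
    {η D : ℕ → 𝕜} {n : ℕ} (hη : ∀ i < n, η i = 2 / (μ * (γ + i))) (hD : 0 ≤ D 0)
    (hrec : ∀ i < n, D (i + 1) ≤ (1 - μ * η i) * D i + η i ^ 2 * B) :
    D n ≤ (4 * B + μ ^ 2 * (γ + 1) * D 0) / (μ ^ 2 * (γ + n)) := by
  have γ_pos : 0 < γ := two_pos.trans_le hγ
  set v := 4 * B / μ ^ 2 + (γ + 1) * D 0 with hv
  have noise_le : 4 * B / μ ^ 2 ≤ v := le_add_of_nonneg_right (by positivity)
  have init_le : D 0 ≤ v / γ := by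
    have noise_nonneg : 0 ≤ 4 * B / μ ^ 2 := by positivity
    rw [le_div_iff₀ γ_pos]
    linarith
  have decay : D n ≤ v / (γ + n) := by
    refine le_div_add_natCast_of_recursion hγ (by positivity) init_le fun i hi => ?_
    have ne_zero : γ + i ≠ 0 := by positivity
    calc D (i + 1) ≤ (1 - μ * η i) * D i + η i ^ 2 * B := hrec i hi
      _ = (1 - 2 / (γ + i)) * D i + 4 * B / μ ^ 2 / (γ + i) ^ 2 := by
        rw [hη i hi]
        field_simp
        ring
      _ ≤ (1 - 2 / (γ + i)) * D i + v / (γ + i) ^ 2 := by gcongr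
  convert decay using 1
  rw [hv]
  field_simp

lemma two_le_max_eight_mul_div_sub_one {S μ : 𝕜} (hμ : 0 < μ) (hSμ : μ ≤ S) (a : 𝕜) :
    2 ≤ max (8 * S / μ - 1) a := by
  have eight_le : 8 ≤ 8 * S / μ := by
    rw [le_div_iff₀ hμ]
    gcongr
  exact le_max_of_le_left (by linarith)

end Recursion

lemma le_add_mul_norm_sub_sq_of_gradient_eq_zero {E : Type*} [SeminormedAddCommGroup E]
    [InnerProductSpace ℝ E] {F : E → ℝ} {G : E → E} {C : ℝ}
    (hsmooth : ∀ x y, F y ≤ F x + ⟪G x, y - x⟫ + C * ‖y - x‖ ^ 2) {w : E} (hw : G w = 0) (y : E) :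
    F y ≤ F w + C * ‖y - w‖ ^ 2 := by
  simpa only [hw, inner_zero_left, add_zero] using hsmooth w y

section Expectation

variable {Ω : Type*} [MeasurableSpace Ω] {P : Measure Ω} [IsProbabilityMeasure P]

lemma integral_comp_sub_le_of_quadratic_upper_bound {E : Type*} [SeminormedAddCommGroup E]
    {F : E → ℝ} {w : E} {C : ℝ} (hF : ∀ y, F y ≤ F w + C * ‖y - w‖ ^ 2) {W : Ω → E}
    (hFW : Integrable (fun ω => F (W ω)) P) (hW : Integrable (fun ω => ‖W ω - w‖ ^ 2) P) :
    ∫ ω, F (W ω) ∂P - F w ≤ C * ∫ ω, ‖W ω - w‖ ^ 2 ∂P := by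
  calc ∫ ω, F (W ω) ∂P - F w = ∫ ω, (F (W ω) - F w) ∂P := by
        rw [integral_sub hFW (integrable_const _), integral_const, probReal_univ, one_smul]
    _ ≤ ∫ ω, C * ‖W ω - w‖ ^ 2 ∂P :=
        integral_mono (hFW.sub (integrable_const _)) (hW.const_mul C)
          fun ω => sub_le_iff_le_add'.mpr (hF (W ω))
    _ = C * ∫ ω, ‖W ω - w‖ ^ 2 ∂P := integral_const_mul _ _

variable {Ec Es : Type*} [SeminormedAddCommGroup Ec] [SeminormedAddCommGroup Es]

lemma integral_comp_prod_sub_le_of_quadratic_upper_bound {F : WithLp 2 (Ec × Es) → ℝ}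
    {wc : Ec} {ws : Es} {C : ℝ}
    (hF : ∀ y, F y ≤ F (WithLp.toLp 2 (wc, ws)) + C * ‖y - WithLp.toLp 2 (wc, ws)‖ ^ 2)
    {Wc : Ω → Ec} {Ws : Ω → Es}
    (hintF : Integrable (fun ω => F (WithLp.toLp 2 (Wc ω, Ws ω))) P)
    (hintc : Integrable (fun ω => ‖Wc ω - wc‖ ^ 2) P)
    (hints : Integrable (fun ω => ‖Ws ω - ws‖ ^ 2) P) :
    ∫ ω, F (WithLp.toLp 2 (Wc ω, Ws ω)) ∂P - F (WithLp.toLp 2 (wc, ws)) ≤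
      C * (∫ ω, ‖Ws ω - ws‖ ^ 2 ∂P + ∫ ω, ‖Wc ω - wc‖ ^ 2 ∂P) := by
  have norm_sq_split : ∀ ω, ‖WithLp.toLp 2 (Wc ω, Ws ω) - WithLp.toLp 2 (wc, ws)‖ ^ 2 =
      ‖Ws ω - ws‖ ^ 2 + ‖Wc ω - wc‖ ^ 2 := fun ω =>
    (WithLp.prod_norm_sq_eq_of_L2 _).trans (add_comm _ _)
  rw [← integral_add hints hintc]
  simp only [← norm_sq_split]
  refine integral_comp_sub_le_of_quadratic_upper_bound hF hintF ?_
  simp only [norm_sq_split]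
  exact hints.add hintc

theorem stmt_0_general {S μ R H γ : ℝ} (hS : 0 ≤ S) (hμ : 0 < μ) (hH : 0 ≤ H) (hγ : 2 ≤ γ)
    {N : ℝ} (hN : N ≠ 0) {n : ℕ} {η : ℕ → ℝ} (hη : ∀ i < n, η i = 2 / (μ * (γ + i)))
    {F : WithLp 2 (Ec × Es) → ℝ} {wc : Ec} {ws : Es}
    (hF : ∀ y, F y ≤ F (WithLp.toLp 2 (wc, ws)) + S / 2 * ‖y - WithLp.toLp 2 (wc, ws)‖ ^ 2)
    {Wc : ℕ → Ω → Ec} {Ws : ℕ → Ω → Es}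
    (hintc : ∀ i ≤ n, Integrable (fun ω => ‖Wc i ω - wc‖ ^ 2) P)
    (hints : ∀ i ≤ n, Integrable (fun ω => ‖Ws i ω - ws‖ ^ 2) P)
    (hintF : Integrable (fun ω => F (WithLp.toLp 2 (Wc n ω, Ws n ω))) P)
    {Δs Δc : ℕ → ℝ} (hΔs : ∀ i, Δs i = ∫ ω, ‖Ws i ω - ws‖ ^ 2 ∂P)
    (hΔc : ∀ i, Δc i = ∫ ω, ‖Wc i ω - wc‖ ^ 2 ∂P)
    (hrecs : ∀ i < n, Δs (i + 1) ≤ (1 - μ * η i) * Δs i + 2 * η i ^ 2 * R ^ 2 / N ^ 2)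
    (hrecc : ∀ i < n, Δc (i + 1) ≤ (1 - μ * η i) * Δc i + η i ^ 2 * H) :
    ∫ ω, F (WithLp.toLp 2 (Wc n ω, Ws n ω)) ∂P - F (WithLp.toLp 2 (wc, ws)) ≤
      S / 2 * ((8 * R ^ 2 + μ ^ 2 * N ^ 2 * (γ + 1) * Δs 0) / (μ ^ 2 * N ^ 2 * (γ + n)) +
        (4 * H + μ ^ 2 * (γ + 1) * Δc 0) / (μ ^ 2 * (γ + n))) := by
  have Δs_nonneg : 0 ≤ Δs 0 := hΔs 0 ▸ integral_nonneg fun ω => sq_nonneg _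
  have Δc_nonneg : 0 ≤ Δc 0 := hΔc 0 ▸ integral_nonneg fun ω => sq_nonneg _
  have server_bound :
      Δs n ≤ (8 * R ^ 2 + μ ^ 2 * N ^ 2 * (γ + 1) * Δs 0) / (μ ^ 2 * N ^ 2 * (γ + n)) := by
    calc Δs n ≤ (4 * (2 * R ^ 2 / N ^ 2) + μ ^ 2 * (γ + 1) * Δs 0) / (μ ^ 2 * (γ + n)) :=
          le_div_of_sgd_recursion hγ hμ (by positivity) hη Δs_nonneg
            fun i hi => (hrecs i hi).trans_eq (by ring)
      _ = _ := by
          field_simp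
          ring
  have client_bound : Δc n ≤ (4 * H + μ ^ 2 * (γ + 1) * Δc 0) / (μ ^ 2 * (γ + n)) :=
    le_div_of_sgd_recursion hγ hμ hH hη Δc_nonneg hrecc
  calc ∫ ω, F (WithLp.toLp 2 (Wc n ω, Ws n ω)) ∂P - F (WithLp.toLp 2 (wc, ws))
      ≤ S / 2 * (Δs n + Δc n) := by
        rw [hΔs, hΔc]
        exact integral_comp_prod_sub_le_of_quadratic_upper_bound hF hintF (hintc n le_rfl)
          (hints n le_rfl)
    _ ≤ _ := by gcongr

end Expectation

/-- Theorem 1 of the paper: convergence bound for MiniBatch-SFL, obtained by combining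
the decomposition lemma with the server-side and client-side recursions. -/
theorem stmt_0 {Ec Es : Type*}
    [NormedAddCommGroup Ec] [InnerProductSpace ℝ Ec] [CompleteSpace Ec]
    [NormedAddCommGroup Es] [InnerProductSpace ℝ Es] [CompleteSpace Es]
    (S μ R H : ℝ) (hμ : 0 < μ) (hSμ : μ ≤ S) (hR : 0 ≤ R) (hH : 0 ≤ H)
    (N T K M : ℕ) (hN : 1 ≤ N) (hT : 1 ≤ T) (hK : 1 ≤ K) (hM : 1 ≤ M)
    (γ : ℝ) (hγ : γ = max (8 * S / μ - 1) ((K * M : ℕ) : ℝ))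
    (η : ℕ → ℝ) (hη : ∀ i : ℕ, η i = 2 / (μ * (γ + i)))
    (F : WithLp 2 (Ec × Es) → ℝ) (G : WithLp 2 (Ec × Es) → WithLp 2 (Ec × Es))
    (hsmooth : ∀ x y : WithLp 2 (Ec × Es),
      F y ≤ F x + ⟪G x, y - x⟫ + S / 2 * ‖y - x‖ ^ 2)
    (wstarc : Ec) (wstars : Es)
    (wstar : WithLp 2 (Ec × Es))
    (hwstar : wstar = (WithLp.equiv 2 (Ec × Es)).symm (wstarc, wstars))
    (hstat : G wstar = 0)
    {Ω : Type*} [MeasurableSpace Ω] (P : Measure Ω) [IsProbabilityMeasure P]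
    (Wc : ℕ → Ω → Ec) (Ws : ℕ → Ω → Es)
    (hintc : ∀ i ≤ T * K * M, Integrable (fun ω => ‖Wc i ω - wstarc‖ ^ 2) P)
    (hints : ∀ i ≤ T * K * M, Integrable (fun ω => ‖Ws i ω - wstars‖ ^ 2) P)
    (hintF : Integrable (fun ω =>
      F ((WithLp.equiv 2 (Ec × Es)).symm (Wc (T * K * M) ω, Ws (T * K * M) ω))) P)
    (Δs Δc : ℕ → ℝ)
    (hΔs : ∀ i, Δs i = ∫ ω, ‖Ws i ω - wstars‖ ^ 2 ∂P)
    (hΔc : ∀ i, Δc i = ∫ ω, ‖Wc i ω - wstarc‖ ^ 2 ∂P)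
    (hrecs : ∀ i < T * K * M,
      Δs (i + 1) ≤ (1 - μ * η i) * Δs i + 2 * (η i) ^ 2 * R ^ 2 / (N : ℝ) ^ 2)
    (hrecc : ∀ i < T * K * M,
      Δc (i + 1) ≤ (1 - μ * η i) * Δc i + (η i) ^ 2 * H) :
    (∫ ω, F ((WithLp.equiv 2 (Ec × Es)).symm
        (Wc (T * K * M) ω, Ws (T * K * M) ω)) ∂P) - F wstar ≤
      S / 2 *
        ((8 * R ^ 2 + μ ^ 2 * (N : ℝ) ^ 2 * (γ + 1) * Δs 0) /
            (μ ^ 2 * (N : ℝ) ^ 2 * (γ + ((T * K * M : ℕ) : ℝ))) +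
          (4 * H + μ ^ 2 * (γ + 1) * Δc 0) /
            (μ ^ 2 * (γ + ((T * K * M : ℕ) : ℝ)))) := by
  subst hwstar
  exact stmt_0_general (hμ.le.trans hSμ) hμ hH (hγ ▸ two_le_max_eight_mul_div_sub_one hμ hSμ _)
    (Nat.cast_ne_zero.mpr (Nat.one_le_iff_ne_zero.mp hN)) (fun i _ => hη i)
    (le_add_mul_norm_sub_sq_of_gradient_eq_zero hsmooth hstat)
    hintc hints hintF hΔs hΔc hrecs hrecc
end

section
/- Let γ ≥ 2 and C ≥ 0 be real numbers, and let Δ : ℕ → ℝ be a nonnegative sequence satisfying Δ(i+1) ≤ (1 − 2/(γ + i))·Δ(i) + C/(γ + i)² for all i ∈ ℕ. Then for all i ∈ ℕ, Δ(i) ≤ max(C, (γ+1)·Δ(0)) / (γ + i). -/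
/-!
The profile `v / (γ + i)` is a supersolution of the recurrence `x ↦ (1 - β / t) * x + C / t ^ 2`,
`t = γ + i`, as soon as `C ≤ (β - 1) * v`: one step sends `v / t` to at most `v * (t - 1) / t ^ 2`,
and `(t - 1) * (t + 1) ≤ t ^ 2`. Since `β ≤ t` makes the step monotone in `x`, a sequence starting
below the profile stays below it.
-/

section Recurrence

variable {K : Type*} [Field K] [LinearOrder K] [IsStrictOrderedRing K] {β γ C t v x : K}

lemma sub_one_div_sq_le_one_div_add_one (ht : 0 < t) : (t - 1) / t ^ 2 ≤ 1 / (t + 1) := by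
  rw [div_le_div_iff₀ (by positivity) (by positivity)]
  linarith

lemma one_sub_div_mul_add_div_sq_le_div_add_one (ht : 0 < t) (hβ : β ≤ t) (hv : 0 ≤ v)
    (hC : C ≤ (β - 1) * v) (hx : x ≤ v / t) :
    (1 - β / t) * x + C / t ^ 2 ≤ v / (t + 1) := by
  have hcoef : 0 ≤ 1 - β / t := sub_nonneg.2 ((div_le_one ht).2 hβ)
  calc (1 - β / t) * x + C / t ^ 2
      ≤ (1 - β / t) * (v / t) + (β - 1) * v / t ^ 2 := by gcongr
    _ = v * ((t - 1) / t ^ 2) := by field_simp; ring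
    _ ≤ v * (1 / (t + 1)) :=
      mul_le_mul_of_nonneg_left (sub_one_div_sq_le_one_div_add_one ht) hv
    _ = v / (t + 1) := mul_one_div v (t + 1)

variable {Δ : ℕ → K}

theorem le_div_add_natCast_of_recurrence (hγ : 0 < γ) (hβ : β ≤ γ) (hv : 0 ≤ v)
    (hC : C ≤ (β - 1) * v) (h0 : Δ 0 ≤ v / γ)
    (hrec : ∀ i : ℕ, Δ (i + 1) ≤ (1 - β / (γ + i)) * Δ i + C / (γ + i) ^ 2) (i : ℕ) :
    Δ i ≤ v / (γ + i) := by
  induction i with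
  | zero => simpa using h0
  | succ i ih =>
    have hi : (0 : K) ≤ i := i.cast_nonneg
    rw [Nat.cast_succ, ← add_assoc]
    exact (hrec i).trans <| one_sub_div_mul_add_div_sq_le_div_add_one
      (add_pos_of_pos_of_nonneg hγ hi) (le_add_of_le_of_nonneg hβ hi) hv hC ih

theorem stmt_4_general (hβ : 1 < β) (hβγ : β ≤ γ) (hC : 0 ≤ C)
    (hrec : ∀ i : ℕ, Δ (i + 1) ≤ (1 - β / (γ + i)) * Δ i + C / (γ + i) ^ 2) (i : ℕ) :
    Δ i ≤ max (C / (β - 1)) (γ * Δ 0) / (γ + i) := by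
  have hβ' : 0 < β - 1 := sub_pos.2 hβ
  have hγ : 0 < γ := by linarith
  refine le_div_add_natCast_of_recurrence hγ hβγ ?_ ?_ ?_ hrec i
  · exact le_max_of_le_left (by positivity)
  · exact (div_le_iff₀' hβ').1 (le_max_left _ _)
  · exact (le_div_iff₀' hγ).2 (le_max_right _ _)

end Recurrence

/-- The inductive recurrence lemma behind Propositions 1 and 2. -/
theorem stmt_4 (γ C : ℝ) (hγ : 2 ≤ γ) (hC : 0 ≤ C)
    (Δ : ℕ → ℝ) (hnn : ∀ i, 0 ≤ Δ i)
    (hrec : ∀ i : ℕ, Δ (i + 1) ≤ (1 - 2 / (γ + i)) * Δ i + C / (γ + i) ^ 2) :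
    ∀ i : ℕ, Δ i ≤ max C ((γ + 1) * Δ 0) / (γ + i) := fun i ↦ by
  have hmax : max (C / (2 - 1)) (γ * Δ 0) ≤ max C ((γ + 1) * Δ 0) :=
    max_le_max (by norm_num) (by linarith [hnn 0])
  exact (stmt_4_general one_lt_two hγ hC hrec i).trans (by gcongr)
end

section
/- Let E be a real inner product space, N ≥ 1 an integer, and p_1, …, p_N ≥ 0 weights with Σ_n p_n = 1. Let 0 < μ ≤ S, and for each n let f_n : E → ℝ be S-smooth and μ-strongly convex with gradient g_n, and suppose f_n is bounded below with infimum f_n*. Let F = Σ_n p_n f_n, let w* ∈ E be a global minimizer of F, and set Γ = F(w*) − Σ_n p_n f_n*. Let w_1, …, w_N ∈ E, let w̄ = Σ_n p_n w_n and ḡ = Σ_n p_n g_n(w_n), and let 0 < η ≤ 1/(4S). Then ‖w̄ − η ḡ − w*‖² ≤ (1 − μη)‖w̄ − w*‖² + 2 Σ_n p_n ‖w̄ − w_n‖² + 6Sη²Γ. -/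
open RealInnerProductSpace

/-!
Jensen's inequality for `‖· - z‖ ^ 2` reduces the averaged step to the step `x - η • g v` of one
client, taken from the common point `x` along the gradient at the client's own point `v`, where `z`
is the minimizer. Strong convexity at `v` turns the cross term into the decrease `f v - f z`, and
convexity at `x` trades `f v` for `f x`; each time Young's inequality pays for the displacement
with `‖x - v‖ ^ 2` and a squared gradient. Smoothness bounds the squared gradients by values of
`f`, so that `f x` enters only through a nonpositive multiple of `f x - f z`, and minimality of `z`
makes the weighted sum of these differences nonnegative.
-/

section NormedSpace

variable {V : Type*} [SeminormedAddCommGroup V] [NormedSpace ℝ V]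

theorem norm_smul_sq (a : ℝ) (x : V) : ‖a • x‖ ^ 2 = a ^ 2 * ‖x‖ ^ 2 := by
  rw [norm_smul, mul_pow, Real.norm_eq_abs, sq_abs]

theorem norm_sum_smul_sub_sq_le {ι : Type*}
    {s : Finset ι} {p : ι → ℝ} (hp : ∀ i ∈ s, 0 ≤ p i) (hsum : ∑ i ∈ s, p i = 1)
    (x : ι → V) (z : V) : ‖∑ i ∈ s, p i • x i - z‖ ^ 2 ≤ ∑ i ∈ s, p i * ‖x i - z‖ ^ 2 := by
  simpa only [dist_eq_norm, Pi.pow_apply, smul_eq_mul] using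
    ((convexOn_univ_dist z).pow (fun _ _ => dist_nonneg) 2).map_sum_le hp hsum
      fun i _ => Set.mem_univ (x i)

end NormedSpace

section Gradient

variable {E : Type*} [SeminormedAddCommGroup E] [InnerProductSpace ℝ E]

/-- `f` is `S`-smooth with gradient `g`. The gradient is carried as data, and smoothness is the
quadratic upper bound; differentiability is not presupposed. -/
def IsSmoothWithGrad (S : ℝ) (f : E → ℝ) (g : E → E) : Prop :=
  ∀ x y, f y ≤ f x + ⟪g x, y - x⟫ + S / 2 * ‖y - x‖ ^ 2

/-- `f` is `μ`-strongly convex with gradient `g`, as a quadratic lower bound;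
for `μ = 0` this is convexity with `g` a selection of subgradients. -/
def IsStronglyConvexWithGrad (μ : ℝ) (f : E → ℝ) (g : E → E) : Prop :=
  ∀ x y, f x + ⟪g x, y - x⟫ + μ / 2 * ‖y - x‖ ^ 2 ≤ f y

theorem two_mul_inner_le_norm_sq_add_norm_sq (x y : E) : 2 * ⟪x, y⟫ ≤ ‖x‖ ^ 2 + ‖y‖ ^ 2 := by
  linarith [norm_sub_sq_real x y, sq_nonneg ‖x - y‖]

variable {S μ η c : ℝ} {f : E → ℝ} {g : E → E}

theorem IsSmoothWithGrad.norm_grad_sq_le (hf : IsSmoothWithGrad S f g) (hS : 0 < S)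
    (hc : ∀ x, c ≤ f x) (x : E) : ‖g x‖ ^ 2 ≤ 2 * S * (f x - c) := by
  have hstep : c ≤ f x - ‖g x‖ ^ 2 / (2 * S) := calc
    c ≤ f (x - S⁻¹ • g x) := hc _
    _ ≤ f x + ⟪g x, -(S⁻¹ • g x)⟫ + S / 2 * ‖-(S⁻¹ • g x)‖ ^ 2 := by
      simpa only [sub_sub_cancel_left] using hf x (x - S⁻¹ • g x)
    _ = f x - ‖g x‖ ^ 2 / (2 * S) := by
      rw [inner_neg_right, real_inner_smul_right, real_inner_self_eq_norm_sq, norm_neg,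
        norm_smul_sq]
      field_simp
      ring
  rw [← div_le_iff₀' (by positivity)]
  linarith

theorem IsStronglyConvexWithGrad.mono {ν : ℝ} (hf : IsStronglyConvexWithGrad μ f g) (h : ν ≤ μ) :
    IsStronglyConvexWithGrad ν f g := fun x y =>
  le_trans (by gcongr) (hf x y)

theorem IsStronglyConvexWithGrad.two_mul_sub_le (hf : IsStronglyConvexWithGrad 0 f g)
    (hη : 0 ≤ η) (x v : E) :
    2 * η * (f x - f v) ≤ ‖x - v‖ ^ 2 + η ^ 2 * ‖g x‖ ^ 2 := by
  have hconv : f x - f v ≤ ⟪x - v, g x⟫ := by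
    have := hf x v
    rw [← neg_sub x v, inner_neg_right, real_inner_comm] at this
    linarith
  calc 2 * η * (f x - f v)
      ≤ 2 * η * ⟪x - v, g x⟫ := by gcongr
    _ = 2 * ⟪x - v, η • g x⟫ := by rw [real_inner_smul_right]; ring
    _ ≤ ‖x - v‖ ^ 2 + ‖η • g x‖ ^ 2 := two_mul_inner_le_norm_sq_add_norm_sq _ _
    _ = ‖x - v‖ ^ 2 + η ^ 2 * ‖g x‖ ^ 2 := by rw [norm_smul_sq]

theorem IsStronglyConvexWithGrad.norm_sub_smul_grad_sub_sq_le
    (hf : IsStronglyConvexWithGrad μ f g) (hη : 0 ≤ η) (x v z : E) :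
    ‖x - η • g v - z‖ ^ 2 ≤ ‖x - z‖ ^ 2 - μ * η * ‖v - z‖ ^ 2 + ‖x - v‖ ^ 2
      + 2 * η ^ 2 * ‖g v‖ ^ 2 - 2 * η * (f v - f z) := by
  have hconv : ⟪g v, z - v⟫ ≤ f z - f v - μ / 2 * ‖v - z‖ ^ 2 := by
    have := hf v z
    rw [norm_sub_rev] at this
    linarith
  have hyoung : 2 * ⟪v - x, η • g v⟫ ≤ ‖x - v‖ ^ 2 + η ^ 2 * ‖g v‖ ^ 2 := by
    rw [norm_sub_rev, ← norm_smul_sq]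
    exact two_mul_inner_le_norm_sq_add_norm_sq _ _
  have hsplit : ⟪x - z, η • g v⟫ = -⟪v - x, η • g v⟫ - η * ⟪g v, z - v⟫ := by
    rw [real_inner_comm (z - v)]
    simp only [inner_sub_left, real_inner_smul_right]
    ring
  calc ‖x - η • g v - z‖ ^ 2
      = ‖x - z‖ ^ 2 + 2 * ⟪v - x, η • g v⟫ + 2 * η * ⟪g v, z - v⟫ + η ^ 2 * ‖g v‖ ^ 2 := by
        rw [sub_right_comm, norm_sub_sq_real, hsplit, norm_smul_sq]
        ring
    _ ≤ ‖x - z‖ ^ 2 + (‖x - v‖ ^ 2 + η ^ 2 * ‖g v‖ ^ 2)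
          + 2 * η * (f z - f v - μ / 2 * ‖v - z‖ ^ 2) + η ^ 2 * ‖g v‖ ^ 2 := by gcongr
    _ = _ := by ring

theorem norm_sub_smul_grad_sub_sq_le_of_smooth_of_stronglyConvex (hS : 0 < S) (hμ : 0 ≤ μ)
    (hsmooth : IsSmoothWithGrad S f g) (hconv : IsStronglyConvexWithGrad μ f g)
    (hc : ∀ x, c ≤ f x) (hη₀ : 0 ≤ η) (hη : 2 * S * η ≤ 1) (x v z : E) :
    ‖x - η • g v - z‖ ^ 2 ≤ ‖x - z‖ ^ 2 - μ * η * ‖v - z‖ ^ 2 + 2 * ‖x - v‖ ^ 2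
      + 6 * S * η ^ 2 * (f z - c) - 2 * η * (1 - 2 * S * η) * (1 - S * η) * (f x - f z) := by
  have hstep : ‖x - η • g v - z‖ ^ 2 ≤ ‖x - z‖ ^ 2 - μ * η * ‖v - z‖ ^ 2 + ‖x - v‖ ^ 2
      + 4 * S * η ^ 2 * (f z - c) - (1 - 2 * S * η) * (2 * η * (f v - f z)) := by
    have := mul_le_mul_of_nonneg_left (hsmooth.norm_grad_sq_le hS hc v) (sq_nonneg η)
    linarith [hconv.norm_sub_smul_grad_sub_sq_le hη₀ x v z]
  have hvalue : 2 * η * (1 - S * η) * (f x - f z) - ‖x - v‖ ^ 2 - 2 * S * η ^ 2 * (f z - c)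
      ≤ 2 * η * (f v - f z) := by
    have := mul_le_mul_of_nonneg_left (hsmooth.norm_grad_sq_le hS hc x) (sq_nonneg η)
    linarith [(hconv.mono hμ).two_mul_sub_le hη₀ x v]
  have hweighted := mul_le_mul_of_nonneg_left hvalue (sub_nonneg.2 hη)
  have hslack : 0 ≤ 2 * S * η * (‖x - v‖ ^ 2 + 2 * S * η ^ 2 * (f z - c)) := by
    have : 0 ≤ f z - c := sub_nonneg.2 (hc z)
    positivity
  linarith

end Gradient

theorem stmt_5_general {E ι : Type*} [SeminormedAddCommGroup E] [InnerProductSpace ℝ E]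
    {s : Finset ι} {p : ι → ℝ} (hp : ∀ i ∈ s, 0 ≤ p i) (hsum : ∑ i ∈ s, p i = 1)
    {S μ : ℝ} (hS : 0 < S) (hμ : 0 ≤ μ) {f : ι → E → ℝ} {g : ι → E → E}
    (hsmooth : ∀ i ∈ s, IsSmoothWithGrad S (f i) (g i))
    (hconv : ∀ i ∈ s, IsStronglyConvexWithGrad μ (f i) (g i))
    {c : ι → ℝ} (hc : ∀ i ∈ s, ∀ x, c i ≤ f i x)
    {w : ι → E} {x z : E} (hx : x = ∑ i ∈ s, p i • w i)
    (hz : ∑ i ∈ s, p i * f i z ≤ ∑ i ∈ s, p i * f i x)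
    {η : ℝ} (hη₀ : 0 ≤ η) (hη : η ≤ 1 / (2 * S)) :
    ‖x - η • ∑ i ∈ s, p i • g i (w i) - z‖ ^ 2 ≤
      (1 - μ * η) * ‖x - z‖ ^ 2 + 2 * ∑ i ∈ s, p i * ‖x - w i‖ ^ 2 +
        6 * S * η ^ 2 * (∑ i ∈ s, p i * f i z - ∑ i ∈ s, p i * c i) := by
  have hSη : 2 * S * η ≤ 1 := (le_div_iff₀' (by positivity)).1 hη
  have hdist : ‖x - z‖ ^ 2 ≤ ∑ i ∈ s, p i * ‖w i - z‖ ^ 2 :=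
    hx ▸ norm_sum_smul_sub_sq_le hp hsum w z
  have hdescent : 0 ≤ 2 * η * (1 - 2 * S * η) * (1 - S * η) *
      (∑ i ∈ s, p i * f i x - ∑ i ∈ s, p i * f i z) := by
    have : 0 ≤ 1 - 2 * S * η := sub_nonneg.2 hSη
    have : 0 ≤ 1 - S * η := by linarith [mul_nonneg hS.le hη₀]
    have := sub_nonneg.2 hz
    positivity
  calc ‖x - η • ∑ i ∈ s, p i • g i (w i) - z‖ ^ 2
      = ‖∑ i ∈ s, p i • (x - η • g i (w i)) - z‖ ^ 2 := by
        simp only [smul_sub, Finset.sum_sub_distrib, ← Finset.sum_smul, hsum, one_smul,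
          Finset.smul_sum, smul_comm η]
    _ ≤ ∑ i ∈ s, p i * ‖x - η • g i (w i) - z‖ ^ 2 := norm_sum_smul_sub_sq_le hp hsum _ _
    _ ≤ ∑ i ∈ s, p i * (‖x - z‖ ^ 2 - μ * η * ‖w i - z‖ ^ 2 + 2 * ‖x - w i‖ ^ 2
          + 6 * S * η ^ 2 * (f i z - c i)
          - 2 * η * (1 - 2 * S * η) * (1 - S * η) * (f i x - f i z)) :=
        Finset.sum_le_sum fun i hi => mul_le_mul_of_nonneg_left
          (norm_sub_smul_grad_sub_sq_le_of_smooth_of_stronglyConvex hS hμ (hsmooth i hi)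
            (hconv i hi) (hc i hi) hη₀ hSη x (w i) z) (hp i hi)
    _ = ‖x - z‖ ^ 2 - μ * η * ∑ i ∈ s, p i * ‖w i - z‖ ^ 2 + 2 * ∑ i ∈ s, p i * ‖x - w i‖ ^ 2
          + 6 * S * η ^ 2 * (∑ i ∈ s, p i * f i z - ∑ i ∈ s, p i * c i)
          - 2 * η * (1 - 2 * S * η) * (1 - S * η) *
            (∑ i ∈ s, p i * f i x - ∑ i ∈ s, p i * f i z) := by
        simp only [mul_add, mul_sub, Finset.sum_add_distrib, Finset.sum_sub_distrib,
          ← Finset.sum_mul, hsum, one_mul, mul_left_comm (p _), ← Finset.mul_sum]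
    _ ≤ _ := by linarith [mul_le_mul_of_nonneg_left hdist (mul_nonneg hμ hη₀)]

/-- Deterministic core of the paper's supplementary Lemma 1: bound of one
federated-averaging SGD step for the client-side update. -/
theorem stmt_5 {E : Type*} [NormedAddCommGroup E] [InnerProductSpace ℝ E]
    (N : ℕ) (hN : 1 ≤ N)
    (p : Fin N → ℝ) (hp : ∀ n, 0 ≤ p n) (hpsum : ∑ n, p n = 1)
    (S μ : ℝ) (hμ : 0 < μ) (hμS : μ ≤ S)
    (f : Fin N → E → ℝ) (g : Fin N → E → E)
    (hsmooth : ∀ n, ∀ x y : E, f n y ≤ f n x + ⟪g n x, y - x⟫ + S / 2 * ‖y - x‖ ^ 2)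
    (hsc : ∀ n, ∀ x y : E, f n y ≥ f n x + ⟪g n x, y - x⟫ + μ / 2 * ‖y - x‖ ^ 2)
    (fstar : Fin N → ℝ) (hinf : ∀ n, IsGLB (Set.range (f n)) (fstar n))
    (F : E → ℝ) (hF : ∀ w, F w = ∑ n, p n * f n w)
    (wstar : E) (hmin : ∀ w, F wstar ≤ F w)
    (Γ : ℝ) (hΓ : Γ = F wstar - ∑ n, p n * fstar n)
    (w : Fin N → E)
    (wbar : E) (hwbar : wbar = ∑ n, p n • w n)
    (gbar : E) (hgbar : gbar = ∑ n, p n • g n (w n))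
    (η : ℝ) (hη0 : 0 < η) (hη : η ≤ 1 / (4 * S)) :
    ‖wbar - η • gbar - wstar‖ ^ 2 ≤
      (1 - μ * η) * ‖wbar - wstar‖ ^ 2 + 2 * ∑ n, p n * ‖wbar - w n‖ ^ 2 +
        6 * S * η ^ 2 * Γ := by
  have hS : 0 < S := hμ.trans_le hμS
  simpa only [hΓ, hgbar, hF] using stmt_5_general (fun n _ => hp n) hpsum hS hμ.le
    (fun n _ => hsmooth n) (fun n _ => hsc n) (fun n _ x => (hinf n).1 ⟨x, rfl⟩) hwbar
    (by simpa only [hF] using hmin wbar) hη0.le (hη.trans (by gcongr; norm_num))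
end
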